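/- arXiv:2508.21141 — 3 statements merged into one kernel-verified Lean document; each statement's English description precedes it below -/
import Mathlib

section
/- The weighted estimation error of the preference-prior-informed ridge estimator satisfies ‖θ̃ − θ*‖_A ≤ ‖Σ_{s=1}^n ε_s x_s‖_{A⁻¹} + √λ·‖θ* − θ^pref‖, where ‖θ* − θ^pref‖ is the Euclidean norm. -/
open Matrix Finset

/-- Weighted estimation-error bound for the preference-prior-informed ridge estimator:
`‖θ̃ − θ*‖_A ≤ ‖∑ ε_s x_s‖_{A⁻¹} + √λ ‖θ* − θ^pref‖`. -/
theorem ridge_weighted_error_bound {d n : ℕ} (lam : ℝ) (hlam : 0 < lam)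
    (x : Fin n → (Fin d → ℝ)) (θpref θstar : Fin d → ℝ) (ε : Fin n → ℝ)
    (A : Matrix (Fin d) (Fin d) ℝ)
    (hA : A = lam • (1 : Matrix (Fin d) (Fin d) ℝ) + ∑ s, vecMulVec (x s) (x s))
    (r : Fin n → ℝ) (hr : ∀ s, r s = θstar ⬝ᵥ x s + ε s)
    (b : Fin d → ℝ) (hb : b = lam • θpref + ∑ s, r s • x s)
    (θtilde : Fin d → ℝ) (hθ : θtilde = A⁻¹ *ᵥ b) :
    Real.sqrt ((θtilde - θstar) ⬝ᵥ (A *ᵥ (θtilde - θstar))) ≤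
      Real.sqrt ((∑ s, ε s • x s) ⬝ᵥ (A⁻¹ *ᵥ ∑ s, ε s • x s)) +
        Real.sqrt lam * Real.sqrt ((θstar - θpref) ⬝ᵥ (θstar - θpref)) := by
  have hmul : ∀ v, A *ᵥ v = lam • v + ∑ s, (v ⬝ᵥ x s) • x s := by
    intro v
    rw [hA, add_mulVec, smul_mulVec, one_mulVec, sum_mulVec]
    congr 1
    refine Finset.sum_congr rfl fun s _ => ?_
    rw [vecMulVec_mulVec, dotProduct_comm v]
    ext i
    simp [mul_comm]
  have hbil : ∀ u v, u ⬝ᵥ (A *ᵥ v) = lam * (u ⬝ᵥ v) + ∑ s, (u ⬝ᵥ x s) * (v ⬝ᵥ x s) := by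
    intro u v
    rw [hmul, dotProduct_add, dotProduct_smul, dotProduct_sum, smul_eq_mul]
    congr 1
    refine Finset.sum_congr rfl fun s _ => ?_
    rw [dotProduct_smul, smul_eq_mul, mul_comm]
  have hsymm : ∀ u v, u ⬝ᵥ (A *ᵥ v) = v ⬝ᵥ (A *ᵥ u) := by
    intro u v
    rw [hbil, hbil, dotProduct_comm u v]
    congr 1
    exact Finset.sum_congr rfl fun s _ => mul_comm _ _
  have hdd : ∀ v : Fin d → ℝ, 0 ≤ v ⬝ᵥ v := fun v =>
    Finset.sum_nonneg fun i _ => mul_self_nonneg (v i)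
  have hlow : ∀ v, lam * (v ⬝ᵥ v) ≤ v ⬝ᵥ (A *ᵥ v) := by
    intro v
    rw [hbil]
    have : 0 ≤ ∑ s, (v ⬝ᵥ x s) * (v ⬝ᵥ x s) := Finset.sum_nonneg fun s _ => mul_self_nonneg _
    linarith
  have hnn : ∀ v, 0 ≤ v ⬝ᵥ (A *ᵥ v) := fun v =>
    (mul_nonneg hlam.le (hdd v)).trans (hlow v)
  have hunit : IsUnit A := by
    rw [← mulVec_injective_iff_isUnit]
    intro u v huv
    have h0 : A *ᵥ (u - v) = 0 := by
      rw [mulVec_sub]; exact sub_eq_zero.mpr huv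
    have h1 := hlow (u - v)
    rw [h0, dotProduct_zero] at h1
    have h2 : (u - v) ⬝ᵥ (u - v) = 0 := by
      have := hdd (u - v)
      nlinarith
    exact sub_eq_zero.mp (dotProduct_self_eq_zero.mp h2)
  have hdet : IsUnit A.det := (isUnit_iff_isUnit_det A).mp hunit
  have hAinv : ∀ v, A *ᵥ (A⁻¹ *ᵥ v) = v := by
    intro v
    rw [mulVec_mulVec, mul_nonsing_inv A hdet, one_mulVec]
  have hinvA : ∀ v, A⁻¹ *ᵥ (A *ᵥ v) = v := by
    intro v
    rw [mulVec_mulVec, nonsing_inv_mul A hdet, one_mulVec]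
  set S := ∑ s, ε s • x s with hS
  have hbdec : b = A *ᵥ θstar + (S + lam • (θpref - θstar)) := by
    rw [hb, hmul, hS]
    simp only [hr, add_smul, Finset.sum_add_distrib, smul_sub]
    abel
  obtain ⟨u, hu⟩ : ∃ u, u = A⁻¹ *ᵥ S := ⟨_, rfl⟩
  obtain ⟨w, hw⟩ : ∃ w, w = A⁻¹ *ᵥ (lam • (θpref - θstar)) := ⟨_, rfl⟩
  have herr : θtilde - θstar = u + w := by
    rw [hθ, hbdec, mulVec_add, hinvA, mulVec_add, hu, hw]
    abel
  have hQu : S ⬝ᵥ (A⁻¹ *ᵥ S) = u ⬝ᵥ (A *ᵥ u) := by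
    rw [hu, hAinv, dotProduct_comm]
  have hQw : w ⬝ᵥ (A *ᵥ w) ≤ lam * ((θstar - θpref) ⬝ᵥ (θstar - θpref)) := by
    have h1 : w ⬝ᵥ (A *ᵥ w) = lam * (w ⬝ᵥ (θpref - θstar)) := by
      conv_lhs => rw [hw, hAinv, ← hw]
      rw [dotProduct_smul, smul_eq_mul]
    have h2 := hlow w
    have h3 := mul_nonneg hlam.le (hdd (w - (θpref - θstar)))
    have h4 : (w - (θpref - θstar)) ⬝ᵥ (w - (θpref - θstar)) =
        w ⬝ᵥ w - 2 * (w ⬝ᵥ (θpref - θstar)) + (θstar - θpref) ⬝ᵥ (θstar - θpref) := by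
      simp only [dotProduct, Finset.mul_sum, ← Finset.sum_sub_distrib, ← Finset.sum_add_distrib]
      refine Finset.sum_congr rfl fun i _ => ?_
      simp only [Pi.sub_apply]
      ring
    rw [h4] at h3
    nlinarith
  have hexp : ∀ t : ℝ, (u + t • w) ⬝ᵥ (A *ᵥ (u + t • w)) =
      (w ⬝ᵥ (A *ᵥ w)) * (t * t) + (2 * (u ⬝ᵥ (A *ᵥ w))) * t + u ⬝ᵥ (A *ᵥ u) := by
    intro t
    simp only [mulVec_add, mulVec_smul, dotProduct_add, add_dotProduct, smul_dotProduct,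
      dotProduct_smul, smul_eq_mul]
    rw [hsymm w u]
    ring
  have hcs : (u ⬝ᵥ (A *ᵥ w)) ^ 2 ≤ (u ⬝ᵥ (A *ᵥ u)) * (w ⬝ᵥ (A *ᵥ w)) := by
    have h := discrim_le_zero fun t : ℝ => (hexp t) ▸ hnn (u + t • w)
    unfold discrim at h
    nlinarith
  have htri : Real.sqrt ((u + w) ⬝ᵥ (A *ᵥ (u + w))) ≤
      Real.sqrt (u ⬝ᵥ (A *ᵥ u)) + Real.sqrt (w ⬝ᵥ (A *ᵥ w)) := by
    refine Real.sqrt_le_iff.mpr ⟨by positivity, ?_⟩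
    have h1 := hexp 1
    rw [one_smul] at h1
    have h2 := Real.abs_le_sqrt hcs
    rw [Real.sqrt_mul (hnn u)] at h2
    have h3 := le_abs_self (u ⬝ᵥ (A *ᵥ w))
    have h4 := Real.sq_sqrt (hnn u)
    have h5 := Real.sq_sqrt (hnn w)
    rw [h1]
    nlinarith
  rw [herr, hQu, ← Real.sqrt_mul hlam.le]
  exact htri.trans (add_le_add le_rfl (Real.sqrt_le_sqrt hQw))
end

section
/- Let λ > 0, L ≥ 0, and let x_1, …, x_n ∈ ℝ^d satisfy ‖x_s‖ ≤ L (Euclidean norm) for all s. Then det(λI + Σ_{s=1}^n x_s x_sᵀ) ≤ (λ + n·L²/d)^d. -/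
open Matrix Finset

/-- Determinant bound: if `‖x_s‖ ≤ L` for all `s`, then
`det(λI + ∑ x_s x_sᵀ) ≤ (λ + nL²/d)^d`. -/
theorem gram_det_le {d n : ℕ} (lam L : ℝ) (hlam : 0 < lam) (hL : 0 ≤ L)
    (x : Fin n → (Fin d → ℝ)) (hx : ∀ s, Real.sqrt (x s ⬝ᵥ x s) ≤ L) :
    (lam • (1 : Matrix (Fin d) (Fin d) ℝ) + ∑ s, vecMulVec (x s) (x s)).det ≤
      (lam + (n : ℝ) * L ^ 2 / (d : ℝ)) ^ (d : ℕ) := by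
  rcases Nat.eq_zero_or_pos d with rfl | hd
  · simp
  have hdR : (0 : ℝ) < d := by exact_mod_cast hd
  have hA : (lam • (1 : Matrix (Fin d) (Fin d) ℝ) + ∑ s, vecMulVec (x s) (x s)).PosSemidef := by
    refine (Matrix.PosSemidef.one.smul hlam.le).add (Matrix.posSemidef_sum _ fun s _ => ?_)
    simpa using Matrix.posSemidef_vecMulVec_self_star (x s)
  have htr : (lam • (1 : Matrix (Fin d) (Fin d) ℝ) + ∑ s, vecMulVec (x s) (x s)).trace
      ≤ d * lam + n * L ^ 2 := by
    rw [Matrix.trace_add, Matrix.trace_smul, Matrix.trace_one, Matrix.trace_sum]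
    have h : ∑ s, (vecMulVec (x s) (x s)).trace ≤ ∑ _s : Fin n, L ^ 2 := by
      refine Finset.sum_le_sum fun s _ => ?_
      rw [Matrix.trace_vecMulVec]
      exact (Real.sqrt_le_left hL).1 (hx s)
    simp only [Finset.sum_const, Finset.card_univ, Fintype.card_fin, nsmul_eq_mul] at h
    simp only [Fintype.card_fin, smul_eq_mul]
    linarith
  generalize (lam • (1 : Matrix (Fin d) (Fin d) ℝ) + ∑ s, vecMulVec (x s) (x s)) = A at *
  rw [hA.1.trace_eq_sum_eigenvalues] at htr
  rw [hA.1.det_eq_prod_eigenvalues]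
  simp only [RCLike.ofReal_real_eq_id, id_eq] at htr ⊢
  have hnn := hA.eigenvalues_nonneg
  generalize hA.1.eigenvalues = e at *
  have h := Real.geom_mean_le_arith_mean univ (fun _ => (1 : ℝ)) e (by simp) (by simpa using hd)
    (fun i _ => hnn i)
  simp only [Real.rpow_one, Finset.sum_const, Finset.card_univ, Fintype.card_fin, nsmul_eq_mul,
    mul_one, one_mul] at h
  have hp : 0 ≤ ∏ i, e i := Finset.prod_nonneg fun i _ => hnn i
  have h2 : (∑ i, e i) / d ≤ lam + n * L ^ 2 / d := by
    rw [div_le_iff₀ hdR, add_mul, div_mul_cancel₀ _ hdR.ne']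
    linarith
  calc ∏ i, e i = ((∏ i, e i) ^ ((d : ℝ)⁻¹)) ^ d := (Real.rpow_inv_natCast_pow hp hd.ne').symm
    _ ≤ _ := pow_le_pow_left₀ (Real.rpow_nonneg hp _) (h.trans h2) d
end

section
/- Let λ > 0 and x_1, …, x_n ∈ ℝ^d, and define A_t = λI + Σ_{s=1}^t x_s x_sᵀ for 0 ≤ t ≤ n (so A_0 = λI). Then Σ_{t=1}^n min(1, x_tᵀ A_{t−1}⁻¹ x_t) ≤ 2·( log det(A_n) − d·log λ ). -/
open Matrix Finset

lemma min_le_two_log (a : ℝ) (ha : 0 ≤ a) : min 1 a ≤ 2 * Real.log (1 + a) := by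
  have h := Real.one_sub_inv_le_log_of_pos (show 0 < 1 + a by linarith)
  have h2 : 1 - (1 + a)⁻¹ = a / (1 + a) := by field_simp; ring
  rw [h2] at h
  have h3 : min 1 a ≤ 2 * (a / (1 + a)) := by
    rw [← mul_div_assoc, le_div_iff₀ (by linarith)]
    rcases le_total 1 a with h1 | h1
    · rw [min_eq_left h1]; linarith
    · rw [min_eq_right h1]; nlinarith
  linarith

/-- Elliptical potential lemma:
`∑_{t=1}^n min(1, x_tᵀ A_{t−1}⁻¹ x_t) ≤ 2 (log det A_n − d log λ)`. -/
theorem elliptical_potential {d n : ℕ} (lam : ℝ) (hlam : 0 < lam)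
    (x : ℕ → (Fin d → ℝ)) (A : ℕ → Matrix (Fin d) (Fin d) ℝ)
    (hA : ∀ t : ℕ, A t = lam • (1 : Matrix (Fin d) (Fin d) ℝ) +
      ∑ s ∈ Finset.Icc 1 t, vecMulVec (x s) (x s)) :
    ∑ t ∈ Finset.Icc 1 n, min 1 (x t ⬝ᵥ ((A (t - 1))⁻¹ *ᵥ x t)) ≤
      2 * (Real.log (A n).det - (d : ℝ) * Real.log lam) := by
  have hstep : ∀ t, A (t + 1) = A t + vecMulVec (x (t + 1)) (x (t + 1)) := by
    intro t
    rw [hA, hA, Finset.sum_Icc_succ_top (by omega), add_assoc]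
  have h0 : A 0 = lam • (1 : Matrix (Fin d) (Fin d) ℝ) := by rw [hA]; simp
  have hpd : ∀ t, (A t).PosDef := by
    intro t
    induction t with
    | zero => rw [h0]; exact Matrix.PosDef.one.smul hlam
    | succ t ih =>
      rw [hstep]
      refine ih.add_posSemidef ?_
      simpa using posSemidef_vecMulVec_self_star (x (t + 1))
  induction n with
  | zero => rw [h0]; simp [Matrix.det_smul, Real.log_pow]
  | succ n ih =>
    rw [Finset.sum_Icc_succ_top (by omega), Nat.add_sub_cancel]
    have ha : 0 ≤ x (n + 1) ⬝ᵥ ((A n)⁻¹ *ᵥ x (n + 1)) := by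
      simpa using (hpd n).inv.posSemidef.dotProduct_mulVec_nonneg (x (n + 1))
    have hdet : (A (n + 1)).det =
        (A n).det * (1 + x (n + 1) ⬝ᵥ ((A n)⁻¹ *ᵥ x (n + 1))) := by
      rw [hstep, vecMulVec_eq Unit,
        det_add_replicateCol_mul_replicateRow (hpd n).det_pos.ne'.isUnit]
      congr 1
      rw [det_unique, Matrix.mul_assoc, ← replicateCol_mulVec, Matrix.add_apply, Matrix.one_apply_eq, replicateRow_mul_replicateCol_apply]
    have hl := min_le_two_log _ ha
    rw [hdet, Real.log_mul (hpd n).det_pos.ne' (by linarith)]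
    linarith
end
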